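/- Let 𝕎◇ = ⋃_{i=0}^{J−1} 𝕎◇_i ⊆ [−1/2, 1/2]² be a parallelepipedic multiband set consisting of J ≥ 1 pairwise disjoint parallelogram bands. Then there exists a constant C > 0 (depending only on 𝕎◇) such that for all M, N ≥ 2 and every ε ∈ (0, 1/2), the number of indices p ∈ {0, …, MN−1} with ε ≤ λ_{(M,N),𝕎◇}^{(p)} ≤ 1 − ε is at most C·(M·log N + N·log M)/(ε(1−ε)). -/

import Mathlib

open MeasureTheory Matrix Real Set

/-- The 2-D prolate matrix `B_{(M,N),𝕎}`, indexed by pairs, with entries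
`∫_𝕎 exp(2πi (f (m−p) + g (n−q))) df dg`. -/
noncomputable def prolate2D (M N : ℕ) (𝕎 : Set (ℝ × ℝ)) :
    Matrix (Fin M × Fin N) (Fin M × Fin N) ℂ :=
  fun i j => ∫ fg in 𝕎,
    Complex.exp (2 * (Real.pi : ℂ) * Complex.I *
      ((fg.1 : ℂ) * (((i.1 : ℕ) : ℂ) - ((j.1 : ℕ) : ℂ)) +
       (fg.2 : ℂ) * (((i.2 : ℕ) : ℂ) - ((j.2 : ℕ) : ℂ))))

/-- The parallelogram band `{(f,g) : |af + bg − u| ≤ W0 and |cf + dg − v| ≤ W1}`. -/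
def pband (a b c d u v W0 W1 : ℝ) : Set (ℝ × ℝ) :=
  {fg : ℝ × ℝ | |a * fg.1 + b * fg.2 - u| ≤ W0 ∧ |c * fg.1 + d * fg.2 - v| ≤ W1}

/-!
Every eigenvalue `λ` of the prolate matrix `B` lies in `[0, 1]`, because `B` is a Gram matrix, as
is `1 - B` (the prolate matrix of the complementary band). Each `λ ∈ [ε, 1 - ε]` contributes at
least `ε (1 - ε)` to `∑ (λ - λ²) = tr B - ‖B‖²_F`, so it is enough to bound this number. The
entries of the row `(m, n)` of `B` are the Fourier coefficients of the indicator function of the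
band at the frequencies `(p - m, q - n)`; by Parseval, the deficit of this row is the mass of the
coefficients outside that window. The slices of the band parallel to an axis are unions of at most
`J` intervals, so their Fourier coefficients are `O(J / |k|)`, and the mass of the coefficients
outside the window is `O(J²)` times the sum of the reciprocal distances from `(m, n)` to the edges
of the grid. Summing these over the rows gives harmonic sums, whence the logarithms.
-/

open scoped ComplexOrder ENNReal FourierTransform

section Matrix

variable {𝕜 n : Type*} [RCLike 𝕜] [Fintype n] {A : Matrix n n 𝕜}

theorem trace_mul_self_eq_sum_sq_norm (hA : A.IsHermitian) :
    (A * A).trace = ((∑ i, ∑ j, ‖A i j‖ ^ 2 : ℝ) : 𝕜) := by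
  simp only [Matrix.trace, diag_apply, mul_apply, RCLike.ofReal_sum]
  refine Finset.sum_congr rfl fun i _ => Finset.sum_congr rfl fun j _ => ?_
  rw [← hA.apply j i, ← starRingEnd_apply, RCLike.mul_conj, RCLike.ofReal_pow]

variable [DecidableEq n]

theorem trace_mul_self_eq_sum_sq_eigenvalues (hA : A.IsHermitian) :
    (A * A).trace = ∑ i, (hA.eigenvalues i : 𝕜) ^ 2 := by
  conv_lhs => rw [hA.spectral_theorem]
  rw [← map_mul, Unitary.conjStarAlgAut_apply, trace_mul_cycle]
  simp [Matrix.trace, sq]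

theorem sum_eigenvalues_sub_sq (hA : A.IsHermitian) :
    ∑ i, (hA.eigenvalues i - hA.eigenvalues i ^ 2) =
      ∑ i, (RCLike.re (A i i) - ∑ j, ‖A i j‖ ^ 2) := by
  have trace_eq : ∑ i, hA.eigenvalues i = ∑ i, RCLike.re (A i i) := by
    simpa [Matrix.trace] using (congrArg RCLike.re hA.trace_eq_sum_eigenvalues).symm
  have trace_sq_eq : ∑ i, hA.eigenvalues i ^ 2 = ∑ i, ∑ j, ‖A i j‖ ^ 2 := by
    have := (trace_mul_self_eq_sum_sq_eigenvalues hA).symm.trans (trace_mul_self_eq_sum_sq_norm hA)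
    exact_mod_cast this
  rw [Finset.sum_sub_distrib, Finset.sum_sub_distrib, trace_eq, trace_sq_eq]

open scoped MatrixOrder in
theorem eigenvalues_le_one_of_le_one (hA : A.IsHermitian) (h : A ≤ 1) (i : n) :
    hA.eigenvalues i ≤ 1 :=
  (CFC.le_one_iff A hA).mp h _ (hA.eigenvalues_mem_spectrum_real i)

end Matrix

theorem card_mem_Icc_mul_le_sum_sub_sq {ι : Type*} [Fintype ι] {μ : ι → ℝ}
    (hμ : ∀ i, μ i ∈ Icc (0 : ℝ) 1) (ε : ℝ) :
    (Nat.card {i // ε ≤ μ i ∧ μ i ≤ 1 - ε} : ℝ) * (ε * (1 - ε)) ≤ ∑ i, (μ i - μ i ^ 2) := by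
  classical
  rw [Nat.card_eq_fintype_card, Fintype.card_subtype, ← nsmul_eq_mul, ← Finset.sum_const]
  calc ∑ i with ε ≤ μ i ∧ μ i ≤ 1 - ε, ε * (1 - ε)
      ≤ ∑ i with ε ≤ μ i ∧ μ i ≤ 1 - ε, (μ i - μ i ^ 2) := by
        refine Finset.sum_le_sum fun i hi => ?_
        obtain ⟨hl, hu⟩ := (Finset.mem_filter.mp hi).2
        nlinarith
    _ ≤ ∑ i, (μ i - μ i ^ 2) :=
        Finset.sum_le_sum_of_subset_of_nonneg (Finset.subset_univ _) fun i _ _ => by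
          nlinarith [(hμ i).1, (hμ i).2]

section LatticeSums

theorem tsum_ofReal_div_sq_le {c : ℝ} (hc : 0 ≤ c) {K : ℕ} (hK : 1 ≤ K) :
    ∑' i : ℕ, ENNReal.ofReal (c / ((K + i : ℕ) : ℝ) ^ 2) ≤ ENNReal.ofReal (2 * c / K) := by
  refine ENNReal.tsum_le_of_sum_range_le fun n => ?_
  rw [← ENNReal.ofReal_sum_of_nonneg fun i _ => by positivity]
  refine ENNReal.ofReal_le_ofReal ?_
  have reindex : ∑ i ∈ Finset.range n, (((K + i : ℕ) : ℝ) ^ 2)⁻¹ =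
      ∑ j ∈ Finset.Ioo (K - 1) (K + n), ((j : ℝ) ^ 2)⁻¹ := by
    rw [Finset.range_eq_Ico, Finset.sum_Ico_add (fun j : ℕ => ((j : ℝ) ^ 2)⁻¹) 0 n K, zero_add,
      add_comm n]
    congr 1
    ext j
    simp only [Finset.mem_Ico, Finset.mem_Ioo]
    omega
  calc ∑ i ∈ Finset.range n, c / ((K + i : ℕ) : ℝ) ^ 2
      = c * ∑ j ∈ Finset.Ioo (K - 1) (K + n), ((j : ℝ) ^ 2)⁻¹ := by
        rw [← reindex, Finset.mul_sum]; rfl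
    _ ≤ c * (2 / ((K - 1 : ℕ) + 1)) := by gcongr; exact sum_Ioo_inv_sq_le _ _
    _ = 2 * c / K := by rw [Nat.cast_pred hK]; ring

/-- The weight of the position `m` in a window of length `M`: the reciprocal distances from `m` to
the two nearest points outside `{0, …, M - 1}`. -/
noncomputable def edgeWeight (M m : ℕ) : ℝ := 1 / ((M : ℝ) - m) + 1 / ((m : ℝ) + 1)

theorem edgeWeight_nonneg {M m : ℕ} (hm : m < M) : 0 ≤ edgeWeight M m := by
  have : (0 : ℝ) < M - m := sub_pos.mpr (by exact_mod_cast hm)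
  rw [edgeWeight]
  positivity

theorem sum_edgeWeight_le {M : ℕ} (hM : 2 ≤ M) :
    ∑ m : Fin M, edgeWeight M m ≤ 6 * Real.log M := by
  have harmonic_eq : ∑ m ∈ Finset.range M, 1 / ((m : ℝ) + 1) = harmonic M := by
    simp [harmonic]
  have reflected_eq : ∑ m ∈ Finset.range M, 1 / ((M : ℝ) - m) = harmonic M := by
    rw [← harmonic_eq, ← Finset.sum_range_reflect]
    refine Finset.sum_congr rfl fun m hm => ?_
    rw [Finset.mem_range] at hm
    rw [Nat.cast_sub (by omega), Nat.cast_pred (by omega)]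
    ring
  have log_two_le : Real.log 2 ≤ Real.log M :=
    Real.log_le_log two_pos (by exact_mod_cast hM)
  rw [Fin.sum_univ_eq_sum_range]
  simp only [edgeWeight, Finset.sum_add_distrib, harmonic_eq, reflected_eq]
  linarith [harmonic_le_one_add_log M, Real.log_two_gt_d9]

/-- The differences `p - m` between the positions `p` of a window of length `M` and `m`. -/
def windowShift (M m : ℕ) : Finset ℤ :=
  Finset.univ.image fun p : Fin M => ((p : ℕ) : ℤ) - m

theorem mem_windowShift {M m : ℕ} {k : ℤ} :
    k ∈ windowShift M m ↔ -(m : ℤ) ≤ k ∧ k < M - m := by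
  simp only [windowShift, Finset.mem_image, Finset.mem_univ, true_and]
  constructor
  · rintro ⟨p, rfl⟩
    omega
  · intro hk
    exact ⟨⟨(k + m).toNat, by omega⟩, by simp only; omega⟩

theorem sum_windowShift {β : Type*} [AddCommMonoid β] (M m : ℕ) (h : ℤ → β) :
    ∑ k ∈ windowShift M m, h k = ∑ p : Fin M, h (((p : ℕ) : ℤ) - m) :=
  Finset.sum_image fun p _ q _ hpq => by simpa [Fin.ext_iff] using hpq

theorem coe_compl_windowShift_subset {M m : ℕ} (hm : m < M) :
    (windowShift M m : Set ℤ)ᶜ ⊆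
      range (fun i : ℕ => ((M - m + i : ℕ) : ℤ)) ∪ range (fun i : ℕ => -((m + 1 + i : ℕ) : ℤ)) := by
  intro k hk
  rw [mem_compl_iff, Finset.mem_coe, mem_windowShift] at hk
  rcases le_or_gt 0 k with hk0 | hk0
  · exact .inl ⟨(k - (M - m)).toNat, by simp only; omega⟩
  · exact .inr ⟨(-k - (m + 1)).toNat, by simp only; omega⟩

theorem tsum_compl_windowShift_le {c : ℝ} (hc : 0 ≤ c) {M m : ℕ} (hm : m < M) {a : ℤ → ℝ≥0∞}
    (ha : ∀ k : ℤ, k ≠ 0 → a k ≤ ENNReal.ofReal (c / (k : ℝ) ^ 2)) :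
    ∑' k : ((windowShift M m : Set ℤ)ᶜ : Set ℤ), a k ≤ ENNReal.ofReal (2 * c * edgeWeight M m) := by
  have above : ∑' k : range (fun i : ℕ => ((M - m + i : ℕ) : ℤ)), a k ≤
      ENNReal.ofReal (2 * c / (M - m : ℕ)) := by
    rw [tsum_range a fun i j h => by simpa using h]
    refine le_trans (ENNReal.tsum_le_tsum fun i => ?_) (tsum_ofReal_div_sq_le hc (by omega))
    exact (ha _ (by omega)).trans_eq (by push_cast; rfl)
  have below : ∑' k : range (fun i : ℕ => -((m + 1 + i : ℕ) : ℤ)), a k ≤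
      ENNReal.ofReal (2 * c / (m + 1 : ℕ)) := by
    rw [tsum_range a fun i j h => by simpa using h]
    refine le_trans (ENNReal.tsum_le_tsum fun i => ?_) (tsum_ofReal_div_sq_le hc (by omega))
    exact (ha _ (by omega)).trans_eq (by rw [Int.cast_neg, neg_sq, Int.cast_natCast])
  calc ∑' k : ((windowShift M m : Set ℤ)ᶜ : Set ℤ), a k
      ≤ ENNReal.ofReal (2 * c / (M - m : ℕ)) + ENNReal.ofReal (2 * c / (m + 1 : ℕ)) :=
        (ENNReal.tsum_mono_subtype a (coe_compl_windowShift_subset hm)).trans <|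
          (ENNReal.tsum_union_le a _ _).trans (add_le_add above below)
    _ = ENNReal.ofReal (2 * c * edgeWeight M m) := by
        rw [← ENNReal.ofReal_add (by positivity) (by positivity), Nat.cast_sub hm.le, edgeWeight]
        congr 1
        push_cast
        ring

theorem tsum_tsum_le_sum_sum_add_tsum_compl {α β : Type*} (h : α → β → ℝ≥0∞)
    (s : Finset α) (t : Finset β) :
    ∑' a, ∑' b, h a b ≤ ∑ a ∈ s, ∑ b ∈ t, h a b +
      (∑' a : ((s : Set α)ᶜ : Set α), ∑' b, h a b +
        ∑' b : ((t : Set β)ᶜ : Set β), ∑' a, h a b) := by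
  have rows_in_s : ∑ a ∈ s, ∑' b, h a b ≤
      ∑ a ∈ s, ∑ b ∈ t, h a b + ∑' b : ((t : Set β)ᶜ : Set β), ∑' a, h a b := by
    simp_rw [← ENNReal.sum_add_tsum_compl t (h _)]
    rw [Finset.sum_add_distrib, ← Summable.tsum_finsetSum fun _ _ => ENNReal.summable]
    gcongr with b
    exact ENNReal.sum_le_tsum s
  calc ∑' a, ∑' b, h a b
      = ∑ a ∈ s, ∑' b, h a b + ∑' a : ((s : Set α)ᶜ : Set α), ∑' b, h a b :=
        (ENNReal.sum_add_tsum_compl s _).symm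
    _ ≤ _ := by rw [add_comm (∑' a : ((s : Set α)ᶜ : Set α), _), ← add_assoc]; gcongr

end LatticeSums

theorem exists_finset_ordConnected_biUnion_eq {α ι : Type*} [LinearOrder α] [Fintype ι]
    {S : ι → Set α} (hS : ∀ i, (S i).OrdConnected) :
    ∃ 𝒞 : Finset (Set α), 𝒞.card ≤ Fintype.card ι ∧ (∀ C ∈ 𝒞, C.OrdConnected) ∧
      (𝒞 : Set (Set α)).PairwiseDisjoint id ∧ ⋃ C ∈ 𝒞, C = ⋃ i, S i := by
  classical
  rcases isEmpty_or_nonempty α with hα | hα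
  · exact ⟨∅, by simp, by simp, by simp, Subsingleton.elim _ _⟩
  -- The order-connected components of the union: every `S i` lies in a single one of them.
  have exists_component (i : ι) : ∃ x, S i ⊆ (⋃ i, S i).ordConnectedComponent x := by
    rcases (S i).eq_empty_or_nonempty with h | ⟨x, hx⟩
    · exact ⟨Classical.arbitrary α, by simp [h]⟩
    · have := hS i
      exact ⟨x, subset_ordConnectedComponent hx (subset_iUnion S i)⟩
  choose x hx using exists_component
  refine ⟨Finset.univ.image fun i => (⋃ i, S i).ordConnectedComponent (x i),
    Finset.card_image_le, ?_, ?_, ?_⟩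
  · simp only [Finset.mem_image, Finset.mem_univ, true_and, forall_exists_index]
    rintro _ i rfl
    infer_instance
  · simp only [Finset.coe_image, Finset.coe_univ, image_univ]
    rintro _ ⟨i, rfl⟩ _ ⟨j, rfl⟩ hne
    refine Set.disjoint_left.mpr fun y hyi hyj => hne ?_
    exact (ordConnectedComponent_eq hyi).trans (ordConnectedComponent_eq hyj).symm
  · refine subset_antisymm (iUnion₂_subset fun C hC => ?_) (iUnion_subset fun i => ?_)
    · obtain ⟨i, -, rfl⟩ := Finset.mem_image.mp hC
      exact ordConnectedComponent_subset
    · exact (hx i).trans (subset_biUnion_of_mem (u := id) <|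
        Finset.mem_image_of_mem _ (Finset.mem_univ i))

section FourierCharacter

theorem continuous_coe_fourierChar : Continuous fun x : ℝ => (𝐞 x : ℂ) :=
  continuous_subtype_val.comp continuous_fourierChar

theorem integrableOn_fourierChar {X : Type*} [TopologicalSpace X] [MeasurableSpace X]
    [OpensMeasurableSpace X] {μ : Measure X} {s : Set X} (hs : μ s ≠ ∞) {φ : X → ℝ}
    (hφ : Continuous φ) : IntegrableOn (fun x => (𝐞 (φ x) : ℂ)) s μ :=
  Measure.integrableOn_of_bounded (M := 1) hs
    (continuous_coe_fourierChar.comp hφ).aestronglyMeasurable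
    (.of_forall fun _ => (Circle.norm_coe _).le)

theorem intervalIntegral_fourierChar_neg_mul (x y : ℝ) {w : ℝ} (hw : w ≠ 0) :
    ∫ t in x..y, (𝐞 (-(t * w)) : ℂ) = (𝐞 (-(x * w)) - 𝐞 (-(y * w))) / (2 * π * Complex.I * w) := by
  have hderiv (t : ℝ) : HasDerivAt (fun t : ℝ => -(𝐞 (-(t * w)) : ℂ) / (2 * π * Complex.I * w))
      (𝐞 (-(t * w))) t := by
    have := (Real.hasDerivAt_fourierChar (-(t * w))).scomp t ((hasDerivAt_mul_const w).neg)
    refine (this.neg.div_const (2 * π * Complex.I * w)).congr_deriv ?_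
    rw [Complex.real_smul, Complex.ofReal_neg]
    field_simp
  rw [intervalIntegral.integral_eq_sub_of_hasDerivAt fun t _ => hderiv t]
  · ring
  · exact (continuous_coe_fourierChar.comp (by fun_prop)).intervalIntegrable _ _

theorem norm_intervalIntegral_fourierChar_le (x y : ℝ) {w : ℝ} (hw : w ≠ 0) :
    ‖∫ t in x..y, (𝐞 (-(t * w)) : ℂ)‖ ≤ 1 / (π * |w|) := by
  rw [intervalIntegral_fourierChar_neg_mul x y hw]
  calc ‖((𝐞 (-(x * w)) : ℂ) - 𝐞 (-(y * w))) / (2 * π * Complex.I * w)‖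
      ≤ (1 + 1) / (2 * (π * |w|)) := by
        rw [norm_div]
        gcongr
        · exact (norm_sub_le _ _).trans_eq (by simp only [Circle.norm_coe])
        · simp [abs_of_pos Real.pi_pos, mul_assoc]
    _ = 1 / (π * |w|) := by rw [one_add_one_eq_two, ← div_div, div_self two_ne_zero]

theorem ae_eq_Ioc_of_ordConnected {s : Set ℝ} (hs : s.OrdConnected) (hne : s.Nonempty)
    (hb : Bornology.IsBounded s) : s =ᵐ[volume] Ioc (sInf s) (sSup s) := by
  have hIoo := IsConnected.Ioo_csInf_csSup_subset ⟨hne, hs.isPreconnected⟩ hb.bddBelow hb.bddAbove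
  have hIcc := subset_Icc_csInf_csSup hb.bddBelow hb.bddAbove
  exact (hIcc.eventuallyLE.trans Ioc_ae_eq_Icc.symm.le).antisymm
    (Ioo_ae_eq_Ioc.symm.le.trans hIoo.eventuallyLE)

theorem norm_setIntegral_fourierChar_le {s : Set ℝ} (hs : s.OrdConnected)
    (hb : Bornology.IsBounded s) {w : ℝ} (hw : w ≠ 0) :
    ‖∫ t in s, (𝐞 (-(t * w)) : ℂ)‖ ≤ 1 / (π * |w|) := by
  rcases s.eq_empty_or_nonempty with rfl | hne
  · simpa using by positivity
  · rw [setIntegral_congr_set (ae_eq_Ioc_of_ordConnected hs hne hb),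
      ← intervalIntegral.integral_of_le (Real.sInf_le_sSup s hb.bddBelow hb.bddAbove)]
    exact norm_intervalIntegral_fourierChar_le _ _ hw

theorem norm_setIntegral_fourierChar_iUnion_le {ι : Type*} [Fintype ι] {S : ι → Set ℝ}
    (hS : ∀ i, (S i).OrdConnected) (hb : ∀ i, Bornology.IsBounded (S i)) {w : ℝ} (hw : w ≠ 0) :
    ‖∫ t in ⋃ i, S i, (𝐞 (-(t * w)) : ℂ)‖ ≤ Fintype.card ι / (π * |w|) := by
  obtain ⟨𝒞, hcard, hconn, hdisj, hunion⟩ := exists_finset_ordConnected_biUnion_eq hS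
  have hbdd : ∀ C ∈ 𝒞, Bornology.IsBounded C := fun C hC =>
    (Bornology.isBounded_iUnion.mpr hb).subset (hunion ▸ subset_biUnion_of_mem (u := id) hC)
  rw [← hunion, integral_biUnion_finset 𝒞 (fun C hC => (hconn C hC).measurableSet) hdisj
    fun C hC => integrableOn_fourierChar (hbdd C hC).measure_lt_top.ne (by fun_prop)]
  calc ‖∑ C ∈ 𝒞, ∫ t in C, (𝐞 (-(t * w)) : ℂ)‖
      ≤ ∑ C ∈ 𝒞, 1 / (π * |w|) := norm_sum_le_of_le _ fun C hC =>
        norm_setIntegral_fourierChar_le (hconn C hC) (hbdd C hC) hw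
    _ = 𝒞.card / (π * |w|) := by rw [Finset.sum_const, nsmul_eq_mul, mul_one_div]
    _ ≤ Fintype.card ι / (π * |w|) := by gcongr

theorem setIntegral_fourierChar_intCast {a b : ℝ} (hab : b - a = 1) (k : ℤ) :
    ∫ t in Icc a b, (𝐞 (-(t * k)) : ℂ) = if k = 0 then 1 else 0 := by
  split_ifs with hk
  · simp [hk, hab]
  · have periodic : 𝐞 (-(b * k)) = 𝐞 (-(a * k)) := by
      obtain rfl : b = a + 1 := by linarith
      have char_intCast : 𝐞 ((-k : ℤ) : ℝ) = 1 := Circle.exp_two_pi_mul_int (-k)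
      have : -((a + 1) * k) = -(a * k) + (-k : ℤ) := by push_cast; ring
      rw [this, AddChar.map_add_eq_mul, char_intCast, mul_one]
    rw [integral_Icc_eq_integral_Ioc, ← intervalIntegral.integral_of_le (by linarith),
      intervalIntegral_fourierChar_neg_mul a b (by exact_mod_cast hk), periodic, sub_self, zero_div]

theorem enorm_sq_eq_ofReal {E : Type*} [SeminormedAddGroup E] (x : E) :
    ‖x‖ₑ ^ 2 = ENNReal.ofReal (‖x‖ ^ 2) := by
  rw [ENNReal.ofReal_pow (norm_nonneg _), ofReal_norm]

theorem tsum_enorm_fourier_intCast_sq {a b : ℝ} (hab : b - a = 1) {φ : ℝ → ℂ}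
    (hφ : MemLp φ 2 (volume.restrict (Icc a b))) (hsupp : Function.support φ ⊆ Icc a b) :
    ∑' k : ℤ, ‖𝓕 φ (k : ℝ)‖ₑ ^ 2 = ∫⁻ x, ‖φ x‖ₑ ^ 2 := by
  have hlt : a < b := by linarith
  have coeff_eq (k : ℤ) : fourierCoeffOn hlt φ k = 𝓕 φ (k : ℝ) := by
    rw [fourierCoeffOn_eq_integral, hab, div_one, one_smul, Real.fourier_real_eq,
      ← setIntegral_eq_integral_of_forall_compl_eq_zero (s := Icc a b),
      integral_Icc_eq_integral_Ioc, ← intervalIntegral.integral_of_le hlt.le]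
    · refine intervalIntegral.integral_congr fun x _ => ?_
      simp only [fourier_coe_apply, Circle.smul_def, Real.fourierChar_apply, smul_eq_mul]
      congr 2
      push_cast
      ring
    · intro x hx
      rw [Function.notMem_support.mp fun h => hx (hsupp h), smul_zero]
  rw [← restrict_Ioc_eq_restrict_Icc] at hφ
  have parseval := hasSum_sq_fourierCoeffOn hlt hφ
  simp only [coeff_eq, hab, inv_one, one_smul] at parseval
  have lintegral_eq : ∫⁻ x, ‖φ x‖ₑ ^ 2 = ∫⁻ x in Ioc a b, ‖φ x‖ₑ ^ 2 := by
    rw [restrict_Ioc_eq_restrict_Icc]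
    refine (setLIntegral_eq_of_support_subset fun x hx => hsupp ?_).symm
    exact fun h => hx (by simp [h])
  rw [lintegral_eq]
  simp_rw [enorm_sq_eq_ofReal]
  rw [← ENNReal.ofReal_tsum_of_nonneg (fun _ => by positivity) parseval.summable, parseval.tsum_eq,
    intervalIntegral.integral_of_le hlt.le, ofReal_integral_eq_lintegral_ofReal
      (hφ.integrable_norm_pow two_ne_zero) (.of_forall fun x => by positivity)]

end FourierCharacter

section BandFourier

/-- The fundamental domain `[-1/2, 1/2]` of the frequency axis. -/
abbrev centeredInterval : Set ℝ := Icc (-(1 / 2)) (1 / 2)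

/-- The fundamental domain `[-1/2, 1/2]²` of the frequency plane. -/
abbrev centeredSquare : Set (ℝ × ℝ) := centeredInterval ×ˢ centeredInterval

/-- The Fourier transform at `(k, l)` of the indicator function of a set `W` of the plane. -/
noncomputable def bandFourier (W : Set (ℝ × ℝ)) (k l : ℝ) : ℂ :=
  ∫ z in W, (𝐞 (-(z.1 * k + z.2 * l)) : ℂ)

/-- The Fourier transform at `k` of the indicator function of the horizontal slice of `W` at
height `g`. -/
noncomputable def sliceFourier (W : Set (ℝ × ℝ)) (k g : ℝ) : ℂ :=
  𝓕 (fun f : ℝ => W.indicator (1 : ℝ × ℝ → ℂ) (f, g)) k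

variable {W : Set (ℝ × ℝ)}

theorem sliceFourier_eq_setIntegral (hW : MeasurableSet W) (k g : ℝ) :
    sliceFourier W k g = ∫ f in (fun f : ℝ => (f, g)) ⁻¹' W, (𝐞 (-(f * k)) : ℂ) := by
  rw [← integral_indicator (measurable_prodMk_right hW), sliceFourier, Real.fourier_real_eq]
  congr 1 with f
  by_cases h : (f, g) ∈ W <;> simp [h, Circle.smul_def]

theorem measurable_sliceFourier (hW : MeasurableSet W) (k : ℝ) : Measurable (sliceFourier W k) := by
  have hmeas : Measurable fun p : ℝ × ℝ =>
      (𝐞 (-(p.2 * k)) : ℂ) * W.indicator (1 : ℝ × ℝ → ℂ) (p.2, p.1) :=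
    (continuous_coe_fourierChar.comp (by fun_prop)).measurable.mul
      ((measurable_one.indicator hW).comp measurable_swap)
  have hint := (hmeas.stronglyMeasurable.integral_prod_right' (ν := volume)).measurable
  convert hint using 2 with g
  simp only [sliceFourier, Real.fourier_real_eq, Circle.smul_def, smul_eq_mul]

theorem support_sliceFourier_subset (hQ : W ⊆ centeredSquare) (k : ℝ) :
    Function.support (sliceFourier W k) ⊆ centeredInterval := by
  intro g hg
  by_contra hg'
  refine hg ?_
  have (f : ℝ) : W.indicator (1 : ℝ × ℝ → ℂ) (f, g) = 0 :=
    indicator_of_notMem (fun h => hg' (hQ h).2) _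
  simp [sliceFourier, Real.fourier_real_eq, this]

theorem norm_sliceFourier_le_one (hW : MeasurableSet W) (hQ : W ⊆ centeredSquare) (k g : ℝ) :
    ‖sliceFourier W k g‖ ≤ 1 := by
  have hslice : volume ((fun f : ℝ => (f, g)) ⁻¹' W) ≤ 1 :=
    calc volume ((fun f : ℝ => (f, g)) ⁻¹' W)
        ≤ volume centeredInterval := measure_mono fun f hf => (hQ hf).1
      _ ≤ 1 := by rw [Real.volume_Icc]; norm_num
  rw [sliceFourier_eq_setIntegral hW]
  refine (norm_setIntegral_le_of_norm_le_const (C := 1) (hslice.trans_lt ENNReal.one_lt_top)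
    fun f _ => (Circle.norm_coe _).le).trans ?_
  rw [one_mul]
  exact ENNReal.toReal_le_of_le_ofReal zero_le_one (by simpa using hslice)

theorem volume_ne_top_of_subset_centeredSquare (hQ : W ⊆ centeredSquare) : volume W ≠ ∞ :=
  ((isCompact_Icc.prod isCompact_Icc).isBounded.subset hQ).measure_lt_top.ne

theorem fourier_sliceFourier (hW : MeasurableSet W) (hfin : volume W ≠ ∞) (k l : ℝ) :
    𝓕 (sliceFourier W k) l = bandFourier W k l := by
  have hint : Integrable (W.indicator fun z => (𝐞 (-(z.1 * k + z.2 * l)) : ℂ)) :=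
    (integrable_indicator_iff hW).mpr (integrableOn_fourierChar hfin (by fun_prop))
  rw [bandFourier, ← integral_indicator hW, Measure.volume_eq_prod, integral_prod_symm _ hint,
    Real.fourier_real_eq]
  congr 1 with g
  rw [sliceFourier, Real.fourier_real_eq, Circle.smul_def, ← integral_smul]
  congr 1 with f
  by_cases h : (f, g) ∈ W
  · simp [h, Circle.smul_def, AddChar.map_add_eq_mul, mul_comm]
  · simp [h]

theorem bandFourier_preimage_swap (W : Set (ℝ × ℝ)) (k l : ℝ) :
    bandFourier (Prod.swap ⁻¹' W) l k = bandFourier W k l := by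
  have swapped := (Measure.measurePreserving_swap (μ := (volume : Measure ℝ))
    (ν := (volume : Measure ℝ))).setIntegral_preimage_emb
    MeasurableEquiv.prodComm.measurableEmbedding (fun z : ℝ × ℝ => (𝐞 (-(z.1 * k + z.2 * l)) : ℂ)) W
  simpa only [bandFourier, Prod.fst_swap, Prod.snd_swap, add_comm, ← Measure.volume_eq_prod]
    using swapped

theorem tsum_enorm_bandFourier_sq_right (hW : MeasurableSet W) (hQ : W ⊆ centeredSquare) (k : ℝ) :
    ∑' l : ℤ, ‖bandFourier W k l‖ₑ ^ 2 = ∫⁻ g, ‖sliceFourier W k g‖ₑ ^ 2 := by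
  simp_rw [← fourier_sliceFourier hW (volume_ne_top_of_subset_centeredSquare hQ)]
  exact tsum_enorm_fourier_intCast_sq (by norm_num)
    (.of_bound (measurable_sliceFourier hW k).aestronglyMeasurable 1
      (.of_forall (norm_sliceFourier_le_one hW hQ k))) (support_sliceFourier_subset hQ k)

theorem tsum_enorm_sliceFourier_sq (hW : MeasurableSet W) (hQ : W ⊆ centeredSquare) (g : ℝ) :
    ∑' k : ℤ, ‖sliceFourier W k g‖ₑ ^ 2 = ∫⁻ f, W.indicator 1 (f, g) := by
  have hmeas : Measurable fun f : ℝ => W.indicator (1 : ℝ × ℝ → ℂ) (f, g) :=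
    (measurable_one.indicator hW).comp measurable_prodMk_right
  refine (tsum_enorm_fourier_intCast_sq (a := -(1 / 2)) (b := 1 / 2) (by norm_num)
    (.of_bound hmeas.aestronglyMeasurable 1 (.of_forall fun f => ?_)) fun f hf => ?_).trans
      (lintegral_congr fun f => ?_)
  · exact (norm_indicator_le_norm_self _ _).trans (by simp)
  · exact (hQ (mem_of_indicator_ne_zero hf)).1
  · by_cases h : (f, g) ∈ W <;> simp [h]

theorem tsum_tsum_enorm_bandFourier_sq (hW : MeasurableSet W) (hQ : W ⊆ centeredSquare) :
    ∑' k : ℤ, ∑' l : ℤ, ‖bandFourier W k l‖ₑ ^ 2 = volume W := by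
  calc ∑' k : ℤ, ∑' l : ℤ, ‖bandFourier W k l‖ₑ ^ 2
      = ∑' k : ℤ, ∫⁻ g, ‖sliceFourier W k g‖ₑ ^ 2 := by
        simp_rw [tsum_enorm_bandFourier_sq_right hW hQ]
    _ = ∫⁻ g, ∑' k : ℤ, ‖sliceFourier W k g‖ₑ ^ 2 :=
        (lintegral_tsum fun k : ℤ =>
          ((measurable_sliceFourier hW k).enorm.pow_const 2).aemeasurable).symm
    _ = ∫⁻ g, ∫⁻ f, W.indicator 1 (f, g) := by simp_rw [tsum_enorm_sliceFourier_sq hW hQ]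
    _ = volume W := by
        rw [← lintegral_prod_symm' _ (measurable_one.indicator hW), lintegral_indicator_one hW]
        rfl

/-- The indicator functions of the horizontal slices of `W` have Fourier coefficients at most
`c / |k|`, as is the case, up to the value of `c`, when their variation is bounded. -/
def HasSliceDecay (W : Set (ℝ × ℝ)) (c : ℝ) : Prop :=
  ∀ k : ℤ, k ≠ 0 → ∀ g, ‖sliceFourier W k g‖ ≤ c / |(k : ℝ)|

variable {c : ℝ}

theorem HasSliceDecay.tsum_enorm_bandFourier_sq_le (h : HasSliceDecay W c) (hW : MeasurableSet W)
    (hQ : W ⊆ centeredSquare) {k : ℤ} (hk : k ≠ 0) :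
    ∑' l : ℤ, ‖bandFourier W k l‖ₑ ^ 2 ≤ ENNReal.ofReal (c ^ 2 / (k : ℝ) ^ 2) := by
  have pointwise (g : ℝ) : ‖sliceFourier W k g‖ₑ ^ 2 ≤ ENNReal.ofReal (c ^ 2 / (k : ℝ) ^ 2) := by
    rw [enorm_sq_eq_ofReal, ← sq_abs (k : ℝ), ← div_pow]
    gcongr
    exact h k hk g
  have hsupp : (Function.support fun g => ‖sliceFourier W k g‖ₑ ^ 2) ⊆ centeredInterval :=
    fun g hg => support_sliceFourier_subset hQ k fun h0 => hg (by simp [h0])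
  calc ∑' l : ℤ, ‖bandFourier W k l‖ₑ ^ 2
      = ∫⁻ g in centeredInterval, ‖sliceFourier W k g‖ₑ ^ 2 := by
        rw [tsum_enorm_bandFourier_sq_right hW hQ, setLIntegral_eq_of_support_subset hsupp]
    _ ≤ ∫⁻ _ in centeredInterval, ENNReal.ofReal (c ^ 2 / (k : ℝ) ^ 2) :=
        lintegral_mono fun g => pointwise g
    _ = ENNReal.ofReal (c ^ 2 / (k : ℝ) ^ 2) := by
        rw [setLIntegral_const, Real.volume_Icc]
        norm_num

theorem volume_real_sub_sum_norm_bandFourier_sq_le (hW : MeasurableSet W) (hQ : W ⊆ centeredSquare)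
    (h : HasSliceDecay W c) (h' : HasSliceDecay (Prod.swap ⁻¹' W) c) {M N m n : ℕ}
    (hm : m < M) (hn : n < N) :
    volume.real W - ∑ p : Fin M, ∑ q : Fin N,
        ‖bandFourier W (((p : ℕ) - m : ℤ) : ℝ) (((q : ℕ) - n : ℤ) : ℝ)‖ ^ 2 ≤
      2 * c ^ 2 * (edgeWeight M m + edgeWeight N n) := by
  have rows := tsum_compl_windowShift_le (sq_nonneg c) hm
    fun k hk => h.tsum_enorm_bandFourier_sq_le hW hQ hk
  have columns := tsum_compl_windowShift_le (sq_nonneg c) hn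
    fun l hl => h'.tsum_enorm_bandFourier_sq_le (measurable_swap hW) (fun z hz => (hQ hz).symm) hl
  simp_rw [bandFourier_preimage_swap] at columns
  have total := (tsum_tsum_le_sum_sum_add_tsum_compl (fun k l : ℤ => ‖bandFourier W k l‖ₑ ^ 2)
    (windowShift M m) (windowShift N n)).trans (add_le_add le_rfl (add_le_add rows columns))
  have hwM := edgeWeight_nonneg hm
  have hwN := edgeWeight_nonneg hn
  simp_rw [tsum_tsum_enorm_bandFourier_sq hW hQ, sum_windowShift, enorm_sq_eq_ofReal] at total
  rw [← ofReal_measureReal (volume_ne_top_of_subset_centeredSquare hQ),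
    ← ENNReal.ofReal_add (by positivity) (by positivity), ← mul_add] at total
  simp_rw [← ENNReal.ofReal_sum_of_nonneg fun _ _ => sq_nonneg _] at total
  rw [← ENNReal.ofReal_sum_of_nonneg fun _ _ => by positivity,
    ← ENNReal.ofReal_add (by positivity) (by positivity),
    ENNReal.ofReal_le_ofReal_iff (by positivity)] at total
  exact sub_le_iff_le_add'.mpr total

end BandFourier

section ConvexSlices

variable {ι : Type*} [Fintype ι] {P : ι → Set (ℝ × ℝ)}

theorem ordConnected_preimage_prodMk_right {s : Set (ℝ × ℝ)} (hs : Convex ℝ s) (g : ℝ) :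
    ((fun f : ℝ => (f, g)) ⁻¹' s).OrdConnected :=
  (hs.affine_preimage ((AffineMap.id ℝ ℝ).prod (AffineMap.const ℝ ℝ g))).ordConnected

theorem hasSliceDecay_iUnion_of_convex (hmeas : ∀ i, MeasurableSet (P i))
    (hconv : ∀ i, Convex ℝ (P i)) (hQ : ∀ i, P i ⊆ centeredSquare) :
    HasSliceDecay (⋃ i, P i) (Fintype.card ι / π) := by
  intro k hk g
  rw [sliceFourier_eq_setIntegral (.iUnion hmeas), preimage_iUnion, div_div]
  exact norm_setIntegral_fourierChar_iUnion_le
    (fun i => ordConnected_preimage_prodMk_right (hconv i) g)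
    (fun i => (Metric.isBounded_Icc _ _).subset fun f hf => (hQ i hf).1) (by exact_mod_cast hk)

theorem hasSliceDecay_preimage_swap_iUnion_of_convex (hmeas : ∀ i, MeasurableSet (P i))
    (hconv : ∀ i, Convex ℝ (P i)) (hQ : ∀ i, P i ⊆ centeredSquare) :
    HasSliceDecay (Prod.swap ⁻¹' ⋃ i, P i) (Fintype.card ι / π) := by
  rw [preimage_iUnion]
  exact hasSliceDecay_iUnion_of_convex (fun i => measurable_swap (hmeas i))
    (fun i => (hconv i).is_linear_preimage (LinearEquiv.prodComm ℝ ℝ ℝ).toLinearMap.isLinear)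
    fun i z hz => (hQ i hz).symm

end ConvexSlices

section Prolate

variable {W : Set (ℝ × ℝ)} {M N : ℕ}

theorem prolate2D_apply (W : Set (ℝ × ℝ)) (i j : Fin M × Fin N) :
    prolate2D M N W i j = bandFourier W (((j.1 : ℕ) - (i.1 : ℕ) : ℤ) : ℝ)
      (((j.2 : ℕ) - (i.2 : ℕ) : ℤ) : ℝ) := by
  simp only [prolate2D, bandFourier, Real.fourierChar_apply]
  congr 1 with z
  congr 1
  push_cast
  ring

theorem re_prolate2D_diag (W : Set (ℝ × ℝ)) (i : Fin M × Fin N) :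
    (prolate2D M N W i i).re = volume.real W := by
  simp [prolate2D]

theorem posSemidef_prolate2D (hfin : volume W ≠ ∞) : (prolate2D M N W).PosSemidef := by
  have := Fact.mk (lt_top_iff_ne_top.mpr hfin)
  let character (i : Fin M × Fin N) (z : ℝ × ℝ) : ℂ := 𝐞 (-(z.1 * (i.1 : ℕ) + z.2 * (i.2 : ℕ)))
  have memLp (i : Fin M × Fin N) : MemLp (character i) 2 (volume.restrict W) :=
    .of_bound (continuous_coe_fourierChar.comp (by fun_prop)).aestronglyMeasurable 1
      (.of_forall fun _ => (Circle.norm_coe _).le)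
  have eq_gram : prolate2D M N W = gram ℂ fun i => (memLp i).toLp := by
    ext i j
    rw [gram_apply, L2.inner_def, prolate2D_apply, bandFourier]
    refine integral_congr_ae ?_
    filter_upwards [(memLp i).coeFn_toLp, (memLp j).coeFn_toLp] with z hi hj
    rw [hi, hj, RCLike.inner_apply, ← Circle.coe_inv_eq_conj, ← AddChar.map_neg_eq_inv,
      ← Circle.coe_mul, ← AddChar.map_add_eq_mul]
    congr 2
    push_cast
    ring
  exact eq_gram ▸ posSemidef_gram ℂ _

theorem prolate2D_centeredSquare : prolate2D M N centeredSquare = 1 := by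
  ext i j
  simp only [prolate2D_apply, bandFourier, neg_add, AddChar.map_add_eq_mul, Circle.coe_mul]
  rw [Measure.volume_eq_prod, setIntegral_prod_mul
    (fun f : ℝ => (𝐞 (-(f * (((j.1 : ℕ) - (i.1 : ℕ) : ℤ) : ℝ))) : ℂ))
    (fun g : ℝ => (𝐞 (-(g * (((j.2 : ℕ) - (i.2 : ℕ) : ℤ) : ℝ))) : ℂ)),
    setIntegral_fourierChar_intCast (by norm_num), setIntegral_fourierChar_intCast (by norm_num),
    ite_zero_mul_ite_zero, mul_one, one_apply]
  refine if_congr ?_ rfl rfl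
  rw [Prod.ext_iff, Fin.ext_iff, Fin.ext_iff]
  omega

theorem prolate2D_diff {V : Set (ℝ × ℝ)} (hW : MeasurableSet W) (hWV : W ⊆ V)
    (hV : volume V ≠ ∞) : prolate2D M N (V \ W) = prolate2D M N V - prolate2D M N W := by
  ext i j
  simp only [Matrix.sub_apply, prolate2D_apply, bandFourier]
  exact setIntegral_sdiff hW (integrableOn_fourierChar hV (by fun_prop)) hWV

open scoped MatrixOrder in
theorem prolate2D_le_one (hW : MeasurableSet W) (hQ : W ⊆ centeredSquare) :
    prolate2D M N W ≤ 1 := by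
  have hfin := volume_ne_top_of_subset_centeredSquare (subset_refl centeredSquare)
  rw [Matrix.le_iff, ← prolate2D_centeredSquare, ← prolate2D_diff hW hQ hfin]
  exact posSemidef_prolate2D (measure_ne_top_of_subset sdiff_subset hfin)

theorem eigenvalues_prolate2D_mem_Icc (hW : MeasurableSet W) (hQ : W ⊆ centeredSquare)
    (hA : (prolate2D M N W).IsHermitian) (i : Fin M × Fin N) :
    hA.eigenvalues i ∈ Icc (0 : ℝ) 1 :=
  ⟨(posSemidef_prolate2D (volume_ne_top_of_subset_centeredSquare hQ)).eigenvalues_nonneg i,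
    eigenvalues_le_one_of_le_one hA (prolate2D_le_one hW hQ) i⟩

theorem sum_sub_sum_norm_prolate2D_sq_le {c : ℝ} (hW : MeasurableSet W) (hQ : W ⊆ centeredSquare)
    (h : HasSliceDecay W c) (h' : HasSliceDecay (Prod.swap ⁻¹' W) c) (hM : 2 ≤ M) (hN : 2 ≤ N) :
    ∑ i, ((prolate2D M N W i i).re - ∑ j, ‖prolate2D M N W i j‖ ^ 2) ≤
      12 * c ^ 2 * (M * Real.log N + N * Real.log M) := by
  calc ∑ i, ((prolate2D M N W i i).re - ∑ j, ‖prolate2D M N W i j‖ ^ 2)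
      ≤ ∑ i : Fin M × Fin N, 2 * c ^ 2 * (edgeWeight M i.1 + edgeWeight N i.2) := by
        refine Finset.sum_le_sum fun i _ => ?_
        simp_rw [re_prolate2D_diag, Fintype.sum_prod_type, prolate2D_apply]
        exact volume_real_sub_sum_norm_bandFourier_sq_le hW hQ h h' i.1.isLt i.2.isLt
    _ = 2 * c ^ 2 * (N * ∑ m : Fin M, edgeWeight M m + M * ∑ n : Fin N, edgeWeight N n) := by
        simp [← Finset.mul_sum, Fintype.sum_prod_type, Finset.sum_add_distrib]
    _ ≤ 2 * c ^ 2 * (N * (6 * Real.log M) + M * (6 * Real.log N)) := by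
        gcongr <;> exact sum_edgeWeight_le ‹_›
    _ = 12 * c ^ 2 * (M * Real.log N + N * Real.log M) := by ring

theorem card_eigenvalues_prolate2D_mem_Icc_le {c : ℝ} (hW : MeasurableSet W)
    (hQ : W ⊆ centeredSquare) (h : HasSliceDecay W c) (h' : HasSliceDecay (Prod.swap ⁻¹' W) c)
    (hM : 2 ≤ M) (hN : 2 ≤ N) (hA : (prolate2D M N W).IsHermitian) {ε : ℝ}
    (hε : ε ∈ Ioo (0 : ℝ) 1) :
    (Nat.card {i // ε ≤ hA.eigenvalues i ∧ hA.eigenvalues i ≤ 1 - ε} : ℝ) ≤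
      12 * c ^ 2 * (M * Real.log N + N * Real.log M) / (ε * (1 - ε)) := by
  rw [le_div_iff₀ (mul_pos hε.1 (sub_pos.mpr hε.2))]
  calc (Nat.card {i // ε ≤ hA.eigenvalues i ∧ hA.eigenvalues i ≤ 1 - ε} : ℝ) * (ε * (1 - ε))
      ≤ ∑ i, (hA.eigenvalues i - hA.eigenvalues i ^ 2) :=
        card_mem_Icc_mul_le_sum_sub_sq (eigenvalues_prolate2D_mem_Icc hW hQ hA) ε
    _ = ∑ i, ((prolate2D M N W i i).re - ∑ j, ‖prolate2D M N W i j‖ ^ 2) :=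
        sum_eigenvalues_sub_sq hA
    _ ≤ 12 * c ^ 2 * (M * Real.log N + N * Real.log M) :=
        sum_sub_sum_norm_prolate2D_sq_le hW hQ h h' hM hN

end Prolate

theorem isClosed_pband (a b c d u v W0 W1 : ℝ) : IsClosed (pband a b c d u v W0 W1) :=
  (isClosed_le (by fun_prop) (by fun_prop)).and (isClosed_le (by fun_prop) (by fun_prop))

theorem convex_setOf_abs_linear_sub_le (a b u w : ℝ) :
    Convex ℝ {z : ℝ × ℝ | |a * z.1 + b * z.2 - u| ≤ w} := by
  have hlin : IsLinearMap ℝ fun z : ℝ × ℝ => a * z.1 + b * z.2 :=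
    (a • LinearMap.fst ℝ ℝ ℝ + b • LinearMap.snd ℝ ℝ ℝ).isLinear
  simpa only [preimage, Metric.mem_closedBall, Real.dist_eq] using
    (convex_closedBall u w).is_linear_preimage hlin

theorem convex_pband (a b c d u v W0 W1 : ℝ) : Convex ℝ (pband a b c d u v W0 W1) :=
  (convex_setOf_abs_linear_sub_le a b u W0).inter (convex_setOf_abs_linear_sub_le c d v W1)

theorem parallelepipedic_multiband_sharp_transition_general {ι κ : Type*} [Fintype ι]
    {P : ι → Set (ℝ × ℝ)} (hmeas : ∀ i, MeasurableSet (P i)) (hconv : ∀ i, Convex ℝ (P i))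
    (hQ : ∀ i, P i ⊆ centeredSquare) {M N : ℕ} (hM : 2 ≤ M) (hN : 2 ≤ N)
    (hA : (prolate2D M N (⋃ i, P i)).IsHermitian) {μ : κ → ℝ} (e : Fin M × Fin N ≃ κ)
    (hμ : hA.eigenvalues = μ ∘ e) {ε : ℝ} (hε : ε ∈ Ioo (0 : ℝ) 1) :
    (Nat.card {p // ε ≤ μ p ∧ μ p ≤ 1 - ε} : ℝ) ≤
      12 * (Fintype.card ι / π) ^ 2 * (M * Real.log N + N * Real.log M) / (ε * (1 - ε)) := by
  rw [← Nat.card_congr (e.subtypeEquiv fun i => by rw [hμ, Function.comp_apply] :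
    {i // ε ≤ hA.eigenvalues i ∧ hA.eigenvalues i ≤ 1 - ε} ≃ {p // ε ≤ μ p ∧ μ p ≤ 1 - ε})]
  exact card_eigenvalues_prolate2D_mem_Icc_le (.iUnion hmeas) (iUnion_subset hQ)
    (hasSliceDecay_iUnion_of_convex hmeas hconv hQ)
    (hasSliceDecay_preimage_swap_iUnion_of_convex hmeas hconv hQ) hM hN hA hε

theorem parallelepipedic_multiband_sharp_transition
    (J : ℕ) (hJ : 1 ≤ J) (a b c d u v W0 W1 : Fin J → ℝ)
    (hV : ∀ i, a i * d i - b i * c i ≠ 0)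
    (hW0 : ∀ i, 0 < W0 i) (hW1 : ∀ i, 0 < W1 i)
    (hsub : ∀ i, pband (a i) (b i) (c i) (d i) (u i) (v i) (W0 i) (W1 i) ⊆
      Set.Icc (-(1 / 2) : ℝ) (1 / 2) ×ˢ Set.Icc (-(1 / 2) : ℝ) (1 / 2))
    (hdisj : ∀ i j, i ≠ j →
      Disjoint (pband (a i) (b i) (c i) (d i) (u i) (v i) (W0 i) (W1 i))
        (pband (a j) (b j) (c j) (d j) (u j) (v j) (W0 j) (W1 j))) :
    ∃ C : ℝ, 0 < C ∧
      ∀ (M N : ℕ), 2 ≤ M → 2 ≤ N →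
        ∀ (hA : (prolate2D M N
            (⋃ i, pband (a i) (b i) (c i) (d i) (u i) (v i) (W0 i) (W1 i))).IsHermitian)
          (μ : Fin (M * N) → ℝ), Antitone μ →
          (∃ e : (Fin M × Fin N) ≃ Fin (M * N), hA.eigenvalues = μ ∘ e) →
          ∀ ε : ℝ, ε ∈ Set.Ioo (0 : ℝ) (1 / 2) →
            (Nat.card {p : Fin (M * N) // ε ≤ μ p ∧ μ p ≤ 1 - ε} : ℝ) ≤
              C * ((M : ℝ) * Real.log (N : ℝ) + (N : ℝ) * Real.log (M : ℝ)) /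
                (ε * (1 - ε)) := by
  have : Nonempty (Fin J) := ⟨⟨0, hJ⟩⟩
  refine ⟨12 * (Fintype.card (Fin J) / π) ^ 2, by positivity, ?_⟩
  intro M N hM hN hA μ _ ⟨e, he⟩ ε hε
  exact parallelepipedic_multiband_sharp_transition_general
    (fun i => (isClosed_pband _ _ _ _ _ _ _ _).measurableSet)
    (fun i => convex_pband _ _ _ _ _ _ _ _) hsub hM hN hA e he
    ⟨hε.1, hε.2.trans one_half_lt_one⟩
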